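/- Let 𝓜 be an infinite MAD family on ℕ. Then for every subset S of K₂, the closure of S equals seqClosure (seqClosure S); in particular every sequentially closed subset of K₂ is closed, i.e. K₂ is a sequential space (of sequential order at most 2). -/

import Mathlib

/-!
The space `K₂` consists of the isolated points `n ∈ ℕ`, one point `p_M` for each `M ∈ 𝓜` (the
class of all free ultrafilters containing `M`) and one point `∞` (the class of all free ultrafilters
containing no member of `𝓜`). Every neighbourhood of `p_M` contains all but finitely many `n ∈ M`
(`finite_notMem_of_mem_nhds`), and by compactness of `βω` every neighbourhood of `∞` contains all
but finitely many of the points `p_M` (`finite_notMem_of_infty`).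

Let `D = {n | n ∈ S}`. If `p_M` lies in the closure of `S` but not in `S`, then `D ∩ M` is infinite,
and an enumeration of it converges to `p_M`. For `∞` in the closure of `S` but not in `S`, let `R`
be the set of those `M ∈ 𝓜` with `p_M ∈ seqClosure S`; it contains every `M ∈ 𝓜` with `p_M ∈ S` or
`D ∩ M` infinite. If `R` is infinite, distinct points `p_M` with `M ∈ R` form a sequence converging to
`∞`. If `R` is finite, maximality of `𝓜` makes `D \ ⋃ R` finite, and the ultrafilters not
containing `D ∪ ⋃ R` form an open saturated set around `∞` missing `S`, which is impossible.
-/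

/-- An ultrafilter on ℕ is free if it is not principal. -/
def FreeUF (U : Ultrafilter ℕ) : Prop := ∀ n : ℕ, U ≠ pure n

/-- `𝓜` is a MAD family on ℕ. -/
def IsMAD (𝓜 : Set (Set ℕ)) : Prop :=
  (∀ M ∈ 𝓜, M.Infinite) ∧
  (∀ M ∈ 𝓜, ∀ N ∈ 𝓜, M ≠ N → (M ∩ N).Finite) ∧
  (∀ D : Set ℕ, D.Infinite → ∃ M ∈ 𝓜, (D ∩ M).Infinite)

/-- The relation ≈₂ on βω associated with the MAD family `𝓜`: two distinct
ultrafilters are identified iff both are free and either they share a member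
of `𝓜` or neither contains a member of `𝓜`.  (For a MAD family this is an
equivalence relation.) -/
def relK2 (𝓜 : Set (Set ℕ)) (x y : Ultrafilter ℕ) : Prop :=
  x = y ∨ (FreeUF x ∧ FreeUF y ∧
    ((∃ M ∈ 𝓜, M ∈ x ∧ M ∈ y) ∨ ((∀ M ∈ 𝓜, M ∉ x) ∧ (∀ M ∈ 𝓜, M ∉ y))))

/-- K₂ = βω/≈₂ with the quotient topology. -/
abbrev K2 (𝓜 : Set (Set ℕ)) : Type := Quot (relK2 𝓜)

/-- The natural quotient mapping j₂ : βω → K₂. -/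
def j2 (𝓜 : Set (Set ℕ)) : Ultrafilter ℕ → K2 𝓜 := Quot.mk (relK2 𝓜)

open Filter Topology

lemma FreeUF.notMem_of_finite {U : Ultrafilter ℕ} (hU : FreeUF U) {F : Set ℕ} (hF : F.Finite) :
    F ∉ U := by
  intro h
  obtain ⟨n, -, hn⟩ := Ultrafilter.eq_pure_of_finite_mem hF h
  exact hU n hn

lemma FreeUF.exists_of_infinite {A : Set ℕ} (hA : A.Infinite) :
    ∃ U : Ultrafilter ℕ, FreeUF U ∧ A ∈ U := by
  have : NeBot (cofinite ⊓ 𝓟 A) := hA.cofinite_inf_principal_neBot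
  have hle := Ultrafilter.of_le (cofinite ⊓ 𝓟 A)
  refine ⟨Ultrafilter.of (cofinite ⊓ 𝓟 A), fun n hn => ?_, ?_⟩
  · have h1 : ({n}ᶜ : Set ℕ) ∈ Ultrafilter.of (cofinite ⊓ 𝓟 A) :=
      hle (mem_inf_of_left (Set.finite_singleton n).compl_mem_cofinite)
    rw [hn, Ultrafilter.mem_pure] at h1
    exact h1 rfl
  · exact hle (mem_inf_of_right (mem_principal_self A))

lemma IsMAD.eq_of_mem {𝓜 : Set (Set ℕ)} (h : IsMAD 𝓜) {U : Ultrafilter ℕ} (hU : FreeUF U)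
    {M N : Set ℕ} (hM : M ∈ 𝓜) (hN : N ∈ 𝓜) (hMU : M ∈ U) (hNU : N ∈ U) : M = N := by
  by_contra hne
  exact hU.notMem_of_finite (h.2.1 M hM N hN hne) (inter_mem hMU hNU)

/-- A basic clopen set `{V | A ∈ V}` that respects `≈₂` descends to an open subset of `K₂`, so it
meets `S` as soon as it contains a representative of a point of the closure of `S`. -/
lemma exists_mem_of_mem_closure {𝓜 : Set (Set ℕ)} {S : Set (K2 𝓜)} {U : Ultrafilter ℕ}
    (hU : j2 𝓜 U ∈ closure S) (A : Set ℕ) (hA : A ∈ U)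
    (hsat : ∀ V W, relK2 𝓜 V W → A ∈ V → A ∈ W) : ∃ V, A ∈ V ∧ j2 𝓜 V ∈ S := by
  have hsymm : ∀ V W, relK2 𝓜 V W → relK2 𝓜 W V := by
    rintro V W (rfl | ⟨hV, hW, ⟨M, hM, h1, h2⟩ | ⟨h1, h2⟩⟩)
    · exact Or.inl rfl
    · exact Or.inr ⟨hW, hV, Or.inl ⟨M, hM, h2, h1⟩⟩
    · exact Or.inr ⟨hW, hV, Or.inr ⟨h2, h1⟩⟩
  let O : Set (K2 𝓜) := {q | Quot.lift (fun V : Ultrafilter ℕ => A ∈ V)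
    (fun V W h => propext ⟨hsat V W h, hsat W V (hsymm V W h)⟩) q}
  have hO : IsOpen O := isOpen_coinduced.2 (ultrafilter_isOpen_basic A)
  obtain ⟨q, hqO, hqS⟩ := mem_closure_iff.1 hU O hO hA
  induction q using Quot.ind with
  | mk V => exact ⟨V, hqO, hqS⟩

lemma finite_notMem_of_mem_nhds {𝓜 : Set (Set ℕ)} {U : Ultrafilter ℕ} (hU : FreeUF U)
    {M : Set ℕ} (hM : M ∈ 𝓜) (hMU : M ∈ U) {O : Set (K2 𝓜)} (hO : IsOpen O)
    (hUO : j2 𝓜 U ∈ O) : {n | n ∈ M ∧ j2 𝓜 (pure n) ∉ O}.Finite := by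
  by_contra hinf
  obtain ⟨V, hV, hVA⟩ := FreeUF.exists_of_infinite hinf
  have hMV : M ∈ V := mem_of_superset hVA fun n hn => hn.1
  have hVU : j2 𝓜 V = j2 𝓜 U := Quot.sound (Or.inr ⟨hV, hU, Or.inl ⟨M, hM, hMV, hMU⟩⟩)
  have hopen : IsOpen (j2 𝓜 ⁻¹' O) := isOpen_coinduced.1 hO
  have hmem : j2 𝓜 ⁻¹' O ∈ 𝓝 V := hopen.mem_nhds (by rwa [Set.mem_preimage, hVU])
  have h2 : {n | j2 𝓜 (pure n) ∈ O} ∈ V := Ultrafilter.tendsto_pure_self V hmem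
  obtain ⟨n, h3, h4⟩ := V.nonempty_of_mem (inter_mem hVA h2)
  exact h3.2 h4

lemma finite_notMem_of_infty {𝓜 : Set (Set ℕ)} (hMAD : IsMAD 𝓜) {U : Ultrafilter ℕ}
    (hU : FreeUF U) (hUM : ∀ M ∈ 𝓜, M ∉ U) {O : Set (K2 𝓜)} (hO : IsOpen O)
    (hUO : j2 𝓜 U ∈ O) :
    {M | M ∈ 𝓜 ∧ ∃ V, FreeUF V ∧ M ∈ V ∧ j2 𝓜 V ∉ O}.Finite := by
  have hopen : IsOpen (j2 𝓜 ⁻¹' O) := isOpen_coinduced.1 hO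
  -- The complement of `O` avoids `∞`, so members of `𝓜` and singletons cover its preimage.
  obtain ⟨b, hb, hbfin, hcov⟩ := hopen.isClosed_compl.isCompact.elim_finite_subcover_image
    (b := 𝓜 ∪ Set.range fun n : ℕ => ({n} : Set ℕ)) (c := fun A => {V : Ultrafilter ℕ | A ∈ V})
    (fun A _ => ultrafilter_isOpen_basic A) (by
      intro V hV
      simp only [Set.mem_iUnion]
      by_cases hf : FreeUF V
      · by_contra hcon
        refine hV ?_
        have : j2 𝓜 V = j2 𝓜 U := Quot.sound (Or.inr ⟨hf, hU, Or.inr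
          ⟨fun M hM hMV => hcon ⟨M, Or.inl hM, hMV⟩, hUM⟩⟩)
        rwa [Set.mem_preimage, this]
      · simp only [FreeUF, not_forall, not_not] at hf
        obtain ⟨n, rfl⟩ := hf
        exact ⟨{n}, Or.inr ⟨n, rfl⟩, rfl⟩)
  refine hbfin.subset ?_
  rintro M ⟨hM, V, hV, hMV, hVO⟩
  have hVc := hcov (show V ∈ (j2 𝓜 ⁻¹' O)ᶜ from hVO)
  simp only [Set.mem_iUnion] at hVc
  obtain ⟨A, hAb, hAV⟩ := hVc
  rcases hb hAb with hA | ⟨n, rfl⟩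
  · rwa [hMAD.eq_of_mem hV hM hA hMV hAV]
  · exact absurd hAV (hV.notMem_of_finite (Set.finite_singleton n))

/-- If infinitely many points of `M` lie in `S`, then `p_M` is a limit of a sequence in `S`. -/
lemma mem_seqClosure_of_infinite {𝓜 : Set (Set ℕ)} {S : Set (K2 𝓜)} {U : Ultrafilter ℕ}
    (hU : FreeUF U) {M : Set ℕ} (hM : M ∈ 𝓜) (hMU : M ∈ U)
    (hinf : {n | n ∈ M ∧ j2 𝓜 (pure n) ∈ S}.Infinite) : j2 𝓜 U ∈ seqClosure S := by
  let f := hinf.natEmbedding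
  refine ⟨fun k => j2 𝓜 (pure (f k : ℕ)), fun k => (f k).2.2, ?_⟩
  rw [tendsto_nhds]
  intro O hO hUO
  have hfin := (finite_notMem_of_mem_nhds hU hM hMU hO hUO).preimage
    (f := fun k => (f k : ℕ)) (fun a _ b _ h => f.injective (Subtype.ext h))
  rw [← Nat.cofinite_eq_atTop]
  refine mem_of_superset hfin.compl_mem_cofinite fun k hk => ?_
  by_contra hcon
  exact hk ⟨(f k).2.1, hcon⟩

/-- If `p_M ∈ T` for infinitely many `M ∈ 𝓜`, then `∞` is a limit of a sequence in `T`. -/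
lemma infty_mem_seqClosure {𝓜 : Set (Set ℕ)} (hMAD : IsMAD 𝓜) {T : Set (K2 𝓜)}
    {U : Ultrafilter ℕ} (hU : FreeUF U) (hUM : ∀ M ∈ 𝓜, M ∉ U)
    (hinf : {M | M ∈ 𝓜 ∧ ∃ V, FreeUF V ∧ M ∈ V ∧ j2 𝓜 V ∈ T}.Infinite) :
    j2 𝓜 U ∈ seqClosure T := by
  let f := hinf.natEmbedding
  choose V hV hMV hVT using fun k => (f k).2.2
  refine ⟨fun k => j2 𝓜 (V k), hVT, ?_⟩
  rw [tendsto_nhds]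
  intro O hO hUO
  have hfin := (finite_notMem_of_infty hMAD hU hUM hO hUO).preimage
    (f := fun k => (f k : Set ℕ)) (fun a _ b _ h => f.injective (Subtype.ext h))
  rw [← Nat.cofinite_eq_atTop]
  refine mem_of_superset hfin.compl_mem_cofinite fun k hk => ?_
  by_contra hcon
  exact hk ⟨(f k).2.1, V k, hV k, hMV k, hcon⟩

lemma mem_seqClosure_of_mem {𝓜 : Set (Set ℕ)} (hMAD : IsMAD 𝓜) {S : Set (K2 𝓜)}
    {U : Ultrafilter ℕ} (hU : FreeUF U) (hcl : j2 𝓜 U ∈ closure S)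
    {M : Set ℕ} (hM : M ∈ 𝓜) (hMU : M ∈ U) : j2 𝓜 U ∈ seqClosure S := by
  by_cases hS : j2 𝓜 U ∈ S
  · exact subset_seqClosure hS
  refine mem_seqClosure_of_infinite hU hM hMU fun hfin => ?_
  have key : ∀ V : Ultrafilter ℕ, FreeUF V → M ∈ V →
      M \ {n | n ∈ M ∧ j2 𝓜 (pure n) ∈ S} ∈ V := fun V hV hMV =>
    inter_mem hMV (Ultrafilter.compl_mem_iff_notMem.2 (hV.notMem_of_finite hfin))
  obtain ⟨V, hAV, hVS⟩ := exists_mem_of_mem_closure hcl _ (key U hU hMU) (by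
    rintro V W (rfl | ⟨hV, hW, ⟨N, hN, hNV, hNW⟩ | ⟨h1, -⟩⟩) hA
    · exact hA
    · obtain rfl := hMAD.eq_of_mem hV hM hN (mem_of_superset hA Set.sdiff_subset) hNV
      exact key W hW hNW
    · exact absurd (mem_of_superset hA Set.sdiff_subset) (h1 M hM))
  by_cases hf : FreeUF V
  · have hMV : M ∈ V := mem_of_superset hAV Set.sdiff_subset
    have : j2 𝓜 V = j2 𝓜 U := Quot.sound (Or.inr ⟨hf, hU, Or.inl ⟨M, hM, hMV, hMU⟩⟩)
    exact hS (this ▸ hVS)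
  · simp only [FreeUF, not_forall, not_not] at hf
    obtain ⟨n, rfl⟩ := hf
    rw [Ultrafilter.mem_pure] at hAV
    exact hAV.2 ⟨hAV.1, hVS⟩

lemma infty_mem_seqClosure_seqClosure {𝓜 : Set (Set ℕ)} (hMAD : IsMAD 𝓜) {S : Set (K2 𝓜)}
    {U : Ultrafilter ℕ} (hU : FreeUF U) (hcl : j2 𝓜 U ∈ closure S)
    (hUM : ∀ M ∈ 𝓜, M ∉ U) : j2 𝓜 U ∈ seqClosure (seqClosure S) := by
  by_cases hS : j2 𝓜 U ∈ S
  · exact subset_seqClosure (subset_seqClosure hS)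
  refine infty_mem_seqClosure hMAD hU hUM fun hR => ?_
  set R := {M | M ∈ 𝓜 ∧ ∃ V, FreeUF V ∧ M ∈ V ∧ j2 𝓜 V ∈ seqClosure S} with hRdef
  set D := {n | j2 𝓜 (pure n) ∈ S} with hDdef
  have hDR : (D \ ⋃₀ R).Finite := by
    by_contra hinf
    obtain ⟨M, hM, hDM⟩ := hMAD.2.2 _ hinf
    obtain ⟨V, hV, hMV⟩ := FreeUF.exists_of_infinite (hMAD.1 M hM)
    have hMR : M ∈ R := ⟨hM, V, hV, hMV, mem_seqClosure_of_infinite hV hM hMV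
      (hDM.mono fun n hn => ⟨hn.2, hn.1.1⟩)⟩
    obtain ⟨n, hn⟩ := hDM.nonempty
    exact hn.1.2 ⟨M, hMR, hn.2⟩
  have key : ∀ V : Ultrafilter ℕ, FreeUF V → (∀ M ∈ R, M ∉ V) → (D ∪ ⋃₀ R)ᶜ ∈ V := by
    intro V hV hVR
    rw [Ultrafilter.compl_mem_iff_notMem, ← Set.sdiff_union_self, Ultrafilter.union_mem_iff]
    rintro (h | h)
    · exact hV.notMem_of_finite hDR h
    · obtain ⟨M, hM, hMV⟩ := (Ultrafilter.finite_sUnion_mem_iff hR).1 h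
      exact hVR M hM hMV
  have key' : ∀ V : Ultrafilter ℕ, (D ∪ ⋃₀ R)ᶜ ∈ V → ∀ M ∈ R, M ∉ V := by
    intro V hA M hM hMV
    obtain ⟨n, hn, hn'⟩ := V.nonempty_of_mem (inter_mem hA hMV)
    exact hn (Or.inr ⟨M, hM, hn'⟩)
  obtain ⟨V, hAV, hVS⟩ := exists_mem_of_mem_closure hcl _
    (key U hU fun M hM => hUM M hM.1) (by
    rintro V W (rfl | ⟨hV, hW, ⟨N, hN, hNV, hNW⟩ | ⟨-, h2⟩⟩) hA
    · exact hA
    · refine key W hW fun M hM hMW => ?_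
      obtain rfl := hMAD.eq_of_mem hW hM.1 hN hMW hNW
      exact key' V hA M hM hNV
    · exact key W hW fun M hM => h2 M hM.1)
  by_cases hf : FreeUF V
  · by_cases hVM : ∃ M ∈ 𝓜, M ∈ V
    · obtain ⟨M, hM, hMV⟩ := hVM
      exact key' V hAV M ⟨hM, V, hf, hMV, subset_seqClosure hVS⟩ hMV
    · have : j2 𝓜 V = j2 𝓜 U := Quot.sound (Or.inr ⟨hf, hU, Or.inr
        ⟨fun M hM hMV => hVM ⟨M, hM, hMV⟩, hUM⟩⟩)
      exact hS (this ▸ hVS)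
  · simp only [FreeUF, not_forall, not_not] at hf
    obtain ⟨n, rfl⟩ := hf
    rw [Ultrafilter.mem_pure] at hAV
    exact hAV (Or.inl hVS)

lemma K2.closure_eq {𝓜 : Set (Set ℕ)} (hMAD : IsMAD 𝓜) (S : Set (K2 𝓜)) :
    closure S = seqClosure (seqClosure S) := by
  apply Set.Subset.antisymm
  · intro x hx
    induction x using Quot.ind with
    | mk U =>
      change j2 𝓜 U ∈ _ at hx ⊢
      by_cases hU : FreeUF U
      · by_cases hUM : ∃ M ∈ 𝓜, M ∈ U
        · obtain ⟨M, hM, hMU⟩ := hUM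
          exact subset_seqClosure (mem_seqClosure_of_mem hMAD hU hx hM hMU)
        · exact infty_mem_seqClosure_seqClosure hMAD hU hx fun M hM hMU => hUM ⟨M, hM, hMU⟩
      · simp only [FreeUF, not_forall, not_not] at hU
        obtain ⟨n, rfl⟩ := hU
        obtain ⟨V, hnV, hVS⟩ := exists_mem_of_mem_closure hx {n} rfl (by
          rintro V W (rfl | ⟨hV, -, -⟩) hA
          · exact hA
          · exact absurd hA (hV.notMem_of_finite (Set.finite_singleton n)))
        obtain ⟨m, hm, rfl⟩ := Ultrafilter.eq_pure_of_finite_mem (Set.finite_singleton n) hnV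
        obtain rfl : m = n := hm
        exact subset_seqClosure (subset_seqClosure hVS)
  · exact seqClosure_subset_closure.trans
      (closure_minimal seqClosure_subset_closure isClosed_closure)

/-- For every infinite MAD family 𝓜 on ℕ and every subset `S` of K₂, the
closure of `S` is the twofold iterated sequential closure of `S`; in
particular K₂ is a sequential space (of sequential order at most 2). -/
theorem statement8 (𝓜 : Set (Set ℕ)) (hMAD : IsMAD 𝓜) (hinf : 𝓜.Infinite) :
    (∀ S : Set (K2 𝓜), closure S = seqClosure (seqClosure S)) ∧
    (∀ S : Set (K2 𝓜), IsSeqClosed S → IsClosed S) ∧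
    SequentialSpace (K2 𝓜) := by
  have hclosed : ∀ S : Set (K2 𝓜), IsSeqClosed S → IsClosed S := fun S hS => by
    rw [← closure_eq_iff_isClosed, K2.closure_eq hMAD, hS.seqClosure_eq, hS.seqClosure_eq]
  exact ⟨K2.closure_eq hMAD, hclosed, ⟨hclosed⟩⟩
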